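/- arXiv:math/9902052 — 2 statements merged into one kernel-verified Lean document; each statement's English description precedes it below -/
import Mathlib

section
/- For every continuous function φ : S^{n-1} → ℝ, the Dirichlet problem Du = 0 in B_n, u = φ on S^{n-1}, has a unique solution u continuous on the closed unit ball; this solution is given on B_n by u(x) = P_h[φ](x) = ∫_{S^{n-1}} φ(ξ) P_h(x,ξ) dσ(ξ). -/
/-!
The solution is the hyperbolic Poisson integral `P_h[φ]` on the ball, glued to `φ` on the sphere.

* The kernel `P_h(·, ξ)` is `H`-harmonic for `|ξ| = 1` (`Ph_HHarmonic`): along a line it is a power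
  of a quotient of two quadratic polynomials, and every scalar quantity in `D P_h` is a rational
  function of `a = 1 - |x|²` and `b = |x - ξ|²`. Kernel derivatives are continuous on
  `B_n × S^{n-1}`, so one may differentiate twice under the integral (`param_hasFDerivAt`), and
  `P_h[φ]` is `C²` and `H`-harmonic (`poissonInt_HHarmonic`).
* Weak maximum principle (`max_principle`): since `D|x|² > 0` on the ball, `v + ε|x|²` has no
  interior maximum when `Dv = 0`. This gives uniqueness (`le_of_boundary_eq`).
* Total mass one (`poissonInt_one`): rotation invariance of `σ` makes `P_h[1]` radial, so it is
  constant on each sphere `|y| = |x|`. The maximum principle, applied to `± P_h[1]` on the ball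
  bounded by that sphere, shows `P_h[1](x) = P_h[1](0) = 1`.
* Boundary values (`poissonInt_boundary`): the kernel is nonnegative, has mass one, and tends to `0`
  uniformly away from the boundary point, so it is an approximate identity.

The measure `σ` is normalized Hausdorff measure, so it is a probability measure only once the
Hausdorff measure of the sphere is known to be finite (stereographic projection) and positive
(orthogonal projection to a hyperplane); see `sphMeasure_isProb`.
-/

open MeasureTheory Metric Filter Topology Set
open scoped ContDiff ENNReal NNReal

noncomputable section

/-- `E n` is the Euclidean space `ℝⁿ`. -/
abbrev E (n : ℕ) := EuclideanSpace ℝ (Fin n)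

/-- The normalized surface measure `σ` on the unit sphere `S^{n-1}` (total mass `1`). -/
noncomputable def sphMeasure (n : ℕ) : Measure (E n) :=
  ((μH[(n : ℝ) - 1] (sphere (0 : E n) 1))⁻¹) • ((μH[(n : ℝ) - 1]).restrict (sphere (0 : E n) 1))

/-- The Euclidean Laplacian `Δu(x) = Σ ∂²u/∂x_i²`. -/
noncomputable def lap (n : ℕ) (u : E n → ℝ) (x : E n) : ℝ :=
  ∑ i : Fin n, fderiv ℝ (fun y => fderiv ℝ u y (EuclideanSpace.single i 1)) x (EuclideanSpace.single i 1)

/-- The normal derivation operator `Nu(x) = Σ x_i ∂u/∂x_i(x)`, i.e. the derivative of `u`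
at `x` in the direction `x`. -/
noncomputable def Nder (n : ℕ) (u : E n → ℝ) (x : E n) : ℝ := fderiv ℝ u x x

/-- `u` is `H`-harmonic on `B_n` :
`Du(x) = (1-|x|²)²Δu(x) + 2(n-2)(1-|x|²)Nu(x) = 0` on the unit ball. -/
def HHarmonic (n : ℕ) (u : E n → ℝ) : Prop :=
  ∀ x ∈ ball (0 : E n) 1,
    (1 - ‖x‖ ^ 2) ^ 2 * lap n u x + 2 * ((n : ℝ) - 2) * (1 - ‖x‖ ^ 2) * Nder n u x = 0

/-- The hyperbolic Poisson kernel `P_h(x,ξ) = ((1-|x|²)/|x-ξ|²)^{n-1}`. -/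
noncomputable def Ph (n : ℕ) (x ξ : E n) : ℝ := ((1 - ‖x‖ ^ 2) / ‖x - ξ‖ ^ 2) ^ (n - 1)

/-- The Euclidean Poisson kernel `P_e(x,ξ) = (1-|x|²)/|x-ξ|ⁿ`. -/
noncomputable def Pe (n : ℕ) (x ξ : E n) : ℝ := (1 - ‖x‖ ^ 2) / ‖x - ξ‖ ^ n

/-- `u` has a boundary distribution : for every smooth `Φ` on the sphere,
`∫ u(rζ)Φ(ζ)dσ(ζ)` has a finite limit as `r → 1⁻`. -/
def HasBoundaryDistribution (n : ℕ) (u : E n → ℝ) : Prop :=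
  ∀ Φ : E n → ℝ, ContDiff ℝ ∞ Φ →
    ∃ L : ℝ, Tendsto (fun r : ℝ => ∫ ζ, u (r • ζ) * Φ ζ ∂(sphMeasure n)) (𝓝[<] (1 : ℝ)) (𝓝 L)

/-! ### The surface measure on the sphere -/

/-- A closed hemisphere has finite Hausdorff measure: it is the image of a compact subset of the
hyperplane `vᗮ` under the smooth inverse stereographic projection, and locally Lipschitz maps send
compact sets of the hyperplane to sets of finite Hausdorff measure. -/
lemma hausdorff_hemisphere_lt_top (n : ℕ) (hn : 3 ≤ n) (v : E n) (hv : ‖v‖ = 1) :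
    μH[(n : ℝ) - 1] {x : E n | x ∈ sphere (0 : E n) 1 ∧ inner ℝ v x ≤ 0} < ⊤ := by
  set H : Set (E n) := {x : E n | x ∈ sphere (0 : E n) 1 ∧ inner ℝ v x ≤ 0} with hH
  have hv0 : v ≠ 0 := by rintro rfl; simp at hv
  have : Fact (Module.finrank ℝ (E n) = (n - 1) + 1) := ⟨by simp; omega⟩
  have hfr : Module.finrank ℝ (ℝ ∙ v)ᗮ = n - 1 := Submodule.finrank_orthogonal_span_singleton hv0
  have hd : ((Module.finrank ℝ (ℝ ∙ v)ᗮ : ℕ) : ℝ) = (n : ℝ) - 1 := by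
    rw [hfr]; push_cast [Nat.cast_sub (by omega : 1 ≤ n)]; ring
  have hHc : IsCompact H := by
    have : H = sphere (0 : E n) 1 ∩ {x | inner ℝ v x ≤ 0} := rfl
    rw [this]
    exact (isCompact_sphere _ _).inter_right
      (isClosed_le (continuous_const.inner continuous_id) continuous_const)
  have hC : IsCompact (stereoToFun v '' H) := by
    refine hHc.image_of_continuousOn (continuousOn_stereoToFun.mono ?_)
    rintro x ⟨-, hx⟩
    simp only [mem_ofPred_eq, innerSL_apply_apply]
    linarith
  have hL : LocallyLipschitz (fun w : (ℝ ∙ v)ᗮ => stereoInvFunAux v (w : E n)) :=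
    (contDiff_stereoInvFunAux.comp (ℝ ∙ v)ᗮ.subtypeL.contDiff).locallyLipschitz
  obtain ⟨K, hK⟩ := (hL.locallyLipschitzOn (s := stereoToFun v '' H)).exists_lipschitzOnWith_of_compact hC
  have hsub : H ⊆ (fun w : (ℝ ∙ v)ᗮ => stereoInvFunAux v (w : E n)) '' (stereoToFun v '' H) := by
    intro x hx
    refine ⟨stereoToFun v x, mem_image_of_mem _ hx, ?_⟩
    have hne : x ≠ v := by
      rintro rfl
      have := hx.2
      rw [real_inner_self_eq_norm_sq, hv] at this
      norm_num at this
    have := stereo_left_inv hv (x := ⟨x, hx.1⟩) hne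
    exact congrArg Subtype.val this
  refine (measure_mono hsub).trans_lt ?_
  rw [← hd]
  refine (hK.hausdorffMeasure_image_le (Nat.cast_nonneg _)).trans_lt ?_
  exact ENNReal.mul_lt_top
    (ENNReal.rpow_lt_top_of_nonneg (Nat.cast_nonneg _) ENNReal.coe_ne_top) hC.measure_lt_top

lemma hausdorff_sphere_lt_top (n : ℕ) (hn : 3 ≤ n) :
    μH[(n : ℝ) - 1] (sphere (0 : E n) 1) < ⊤ := by
  set v : E n := EuclideanSpace.single ⟨0, by omega⟩ 1 with hv
  have h1 : ‖v‖ = 1 := by simp [hv]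
  have hsub : sphere (0 : E n) 1 ⊆ {x : E n | x ∈ sphere (0 : E n) 1 ∧ inner ℝ v x ≤ 0} ∪
      {x : E n | x ∈ sphere (0 : E n) 1 ∧ inner ℝ (-v) x ≤ 0} := by
    intro x hx
    rcases le_total (inner ℝ v x) 0 with h | h
    · exact Or.inl ⟨hx, h⟩
    · exact Or.inr ⟨hx, by rw [inner_neg_left]; linarith⟩
  refine (measure_mono hsub).trans_lt ((measure_union_le _ _).trans_lt ?_)
  exact ENNReal.add_lt_top.2 ⟨hausdorff_hemisphere_lt_top n hn v h1,
    hausdorff_hemisphere_lt_top n hn (-v) (by simpa using h1)⟩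

/-- The Hausdorff measure of the unit sphere is positive: the orthogonal projection onto a
hyperplane is `1`-Lipschitz and maps the sphere onto a set containing a ball of the hyperplane. -/
lemma hausdorff_sphere_pos (n : ℕ) (hn : 3 ≤ n) :
    0 < μH[(n : ℝ) - 1] (sphere (0 : E n) 1) := by
  set v : E n := EuclideanSpace.single ⟨0, by omega⟩ 1 with hv
  have h1 : ‖v‖ = 1 := by simp [hv]
  have hv0 : v ≠ 0 := by intro h; simp [h] at h1
  have : Fact (Module.finrank ℝ (E n) = (n - 1) + 1) := ⟨by simp; omega⟩
  have hfr : Module.finrank ℝ (ℝ ∙ v)ᗮ = n - 1 := Submodule.finrank_orthogonal_span_singleton hv0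
  have hd : ((Module.finrank ℝ (ℝ ∙ v)ᗮ : ℕ) : ℝ) = (n : ℝ) - 1 := by
    rw [hfr]; push_cast [Nat.cast_sub (by omega : 1 ≤ n)]; ring
  rw [← hd]
  refine lt_of_lt_of_le ?_ (hausdorffMeasure_orthogonalProjectionOnto_le (ℝ ∙ v)ᗮ _ _ (by positivity))
  refine lt_of_lt_of_le
    (measure_ball_pos (μH[(Module.finrank ℝ (ℝ ∙ v)ᗮ : ℕ)]) (0 : (ℝ ∙ v)ᗮ) zero_lt_one)
    (measure_mono ?_)
  intro w hw
  have hw1 : ‖(w : E n)‖ < 1 := by simpa using hw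
  have hvw : inner ℝ (w : E n) v = 0 := Submodule.mem_orthogonal_singleton_iff_inner_left.mp w.2
  refine ⟨(w : E n) + Real.sqrt (1 - ‖(w : E n)‖ ^ 2) • v, ?_, ?_⟩
  · have hnn : 0 ≤ 1 - ‖(w : E n)‖ ^ 2 := by nlinarith [norm_nonneg (w : E n)]
    have : ‖(w : E n) + Real.sqrt (1 - ‖(w : E n)‖ ^ 2) • v‖ ^ 2 = 1 := by
      rw [norm_add_sq_real, inner_smul_right, hvw, norm_smul, h1, Real.norm_eq_abs, mul_one,
        sq_abs, Real.sq_sqrt hnn]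
      ring
    rw [mem_sphere_zero_iff_norm]
    exact (pow_eq_one_iff_of_nonneg (norm_nonneg _) two_ne_zero).1 this
  · rw [map_add, map_smul, Submodule.orthogonalProjectionOnto_mem_subspace_eq_self]
    rw [Submodule.orthogonalProjectionOnto_orthogonal_apply_eq_zero (Submodule.mem_span_singleton_self v)]
    simp

lemma sphMeasure_isProb (n : ℕ) (hn : 3 ≤ n) : IsProbabilityMeasure (sphMeasure n) := by
  constructor
  rw [sphMeasure, Measure.smul_apply, Measure.restrict_apply_univ, smul_eq_mul]
  exact ENNReal.inv_mul_cancel (hausdorff_sphere_pos n hn).ne' (hausdorff_sphere_lt_top n hn).ne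

lemma sphMeasure_restrict (n : ℕ) :
    (sphMeasure n).restrict (sphere (0 : E n) 1) = sphMeasure n := by
  rw [sphMeasure, Measure.restrict_smul, Measure.restrict_restrict isClosed_sphere.measurableSet, inter_self]

lemma ae_mem_sphere (n : ℕ) : ∀ᵐ ξ ∂(sphMeasure n), ξ ∈ sphere (0 : E n) 1 := by
  rw [← sphMeasure_restrict n]
  exact ae_restrict_mem isClosed_sphere.measurableSet

lemma integral_sphMeasure_comp (n : ℕ) (R : E n ≃ₗᵢ[ℝ] E n) (f : E n → ℝ) :
    ∫ ξ, f (R ξ) ∂(sphMeasure n) = ∫ ξ, f ξ ∂(sphMeasure n) := by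
  have hmp : MeasurePreserving R (sphMeasure n) (sphMeasure n) := by
    have h0 := (R.toIsometryEquiv.measurePreserving_hausdorffMeasure ((n : ℝ) - 1)).restrict_preimage
      (isClosed_sphere (x := (0 : E n)) (ε := 1)).measurableSet
    have hpre : R.toIsometryEquiv ⁻¹' (sphere (0 : E n) 1) = sphere (0 : E n) 1 := by
      ext x; simp
    rw [hpre] at h0
    exact h0.smul_measure _
  exact hmp.integral_comp R.toHomeomorph.measurableEmbedding f

/-- A vector-valued function that is continuous on the sphere is `σ`-integrable. -/
lemma integrable_of_continuousOn_sphere {F : Type*} [NormedAddCommGroup F]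
    (n : ℕ) (hn : 3 ≤ n) {f : E n → F} (hf : ContinuousOn f (sphere (0 : E n) 1)) :
    Integrable f (sphMeasure n) := by
  have := sphMeasure_isProb n hn
  have h := hf.integrableOn_compact (μ := sphMeasure n) (isCompact_sphere _ _)
  rwa [IntegrableOn, sphMeasure_restrict] at h

/-! ### Second derivatives and the maximum principle -/

lemma hasDerivAt_line (n : ℕ) (x e : E n) (t : ℝ) :
    HasDerivAt (fun s : ℝ => x + s • e) e t := by
  simpa using ((hasDerivAt_id t).smul_const e).const_add x

lemma line_hasDerivAt (n : ℕ) {u : E n → ℝ} {x : E n} (hu : ContDiffAt ℝ 2 u x) (e : E n) :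
    ∀ᶠ t in 𝓝 (0 : ℝ), HasDerivAt (fun s : ℝ => u (x + s • e)) (fderiv ℝ u (x + t • e) e) t := by
  have h1 : ∀ᶠ y in 𝓝 x, ContDiffAt ℝ 2 u y := hu.eventually (by simp)
  have hc : Tendsto (fun t : ℝ => x + t • e) (𝓝 0) (𝓝 x) := by
    simpa using (hasDerivAt_line n x e 0).continuousAt.tendsto
  filter_upwards [hc.eventually h1] with t ht
  exact (ht.differentiableAt (by simp)).hasFDerivAt.comp_hasDerivAt t (hasDerivAt_line n x e t)

lemma line_hasDerivAt_two (n : ℕ) {u : E n → ℝ} {x : E n} (hu : ContDiffAt ℝ 2 u x) (e : E n) :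
    HasDerivAt (fun t : ℝ => fderiv ℝ u (x + t • e) e)
      (fderiv ℝ (fun y => fderiv ℝ u y e) x e) 0 := by
  have h1 : ContDiffAt ℝ 1 (fun y => fderiv ℝ u y e) x :=
    (hu.fderiv_right (m := 1) (by norm_num)).clm_apply contDiffAt_const
  have h2 := (h1.differentiableAt (by simp)).hasFDerivAt
  have h3 : HasFDerivAt (fun y => fderiv ℝ u y e) (fderiv ℝ (fun y => fderiv ℝ u y e) x)
      (x + (0 : ℝ) • e) := by simpa using h2
  exact h3.comp_hasDerivAt (0 : ℝ) (hasDerivAt_line n x e 0)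

/-- The pure second derivative of `u` in the direction `e` is the second derivative of the
restriction of `u` to the line through `x` in that direction. -/
lemma line_deriv_deriv (n : ℕ) {u : E n → ℝ} {x : E n} (hu : ContDiffAt ℝ 2 u x) (e : E n) :
    deriv (deriv (fun s : ℝ => u (x + s • e))) 0 = fderiv ℝ (fun y => fderiv ℝ u y e) x e := by
  have h : deriv (fun s : ℝ => u (x + s • e)) =ᶠ[𝓝 0] fun t => fderiv ℝ u (x + t • e) e :=
    (line_hasDerivAt n hu e).mono fun t ht => ht.deriv
  rw [h.deriv_eq, (line_hasDerivAt_two n hu e).deriv]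

lemma lap_nonpos_of_isLocalMax (n : ℕ) {u : E n → ℝ} {x : E n} (hu : ContDiffAt ℝ 2 u x)
    (hm : IsLocalMax u x) : lap n u x ≤ 0 := by
  refine Finset.sum_nonpos fun i _ => ?_
  rw [← line_deriv_deriv n hu]
  set e : E n := EuclideanSpace.single i 1
  set g : ℝ → ℝ := fun s => u (x + s • e) with hg
  by_contra! hpos
  have hgc : ContinuousAt g 0 := (line_hasDerivAt n hu e).self_of_nhds.continuousAt
  have hc : Tendsto (fun t : ℝ => x + t • e) (𝓝 0) (𝓝 x) := by
    simpa using (hasDerivAt_line n x e 0).continuousAt.tendsto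
  have hgm : IsLocalMax g 0 := by
    filter_upwards [hc.eventually hm] with t ht
    simpa [hg] using ht
  have hgmin : IsLocalMin g 0 := isLocalMin_of_deriv_deriv_pos hpos hgm.deriv_eq_zero hgc
  -- a function with both a local minimum and a local maximum at `0` is constant near `0`
  have hconst : g =ᶠ[𝓝 0] fun _ => g 0 := by
    filter_upwards [hgm, hgmin] with t h1 h2 using le_antisymm h1 h2
  have h0 : deriv (deriv g) 0 = 0 := by
    rw [hconst.deriv.deriv_eq]; simp
  exact absurd hpos (by rw [h0]; exact lt_irrefl _)

lemma lap_add_sq (n : ℕ) {u : E n → ℝ} {x : E n} (hu : ContDiffAt ℝ 2 u x) (c : ℝ) :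
    lap n (fun y => u y + c * ‖y‖ ^ 2) x = lap n u x + 2 * n * c := by
  have h1 : ∀ᶠ y in 𝓝 x, ContDiffAt ℝ 2 u y := hu.eventually (by simp)
  have key : ∀ e : E n, ‖e‖ = 1 →
      fderiv ℝ (fun y => fderiv ℝ (fun y => u y + c * ‖y‖ ^ 2) y e) x e
        = fderiv ℝ (fun y => fderiv ℝ u y e) x e + 2 * c := by
    intro e he
    have hev : (fun y => fderiv ℝ (fun y => u y + c * ‖y‖ ^ 2) y e) =ᶠ[𝓝 x]
        fun y => fderiv ℝ u y e + (2 * c) * inner ℝ e y := by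
      filter_upwards [h1] with y hy
      have := (hy.differentiableAt (by simp)).hasFDerivAt.fun_add
        ((hasStrictFDerivAt_norm_sq y).hasFDerivAt.const_mul c)
      rw [HasFDerivAt.fderiv this]
      simp [real_inner_comm]
      ring
    rw [hev.fderiv_eq]
    have h2 : ContDiffAt ℝ 1 (fun y => fderiv ℝ u y e) x :=
      (hu.fderiv_right (m := 1) (by norm_num)).clm_apply contDiffAt_const
    have h3 := (h2.differentiableAt (by simp)).hasFDerivAt.fun_add
      (((innerSL ℝ e).hasFDerivAt (x := x)).const_mul (2 * c))
    have h4 := HasFDerivAt.fderiv h3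
    have h5 := congrArg (fun L => L e) h4
    simp only [innerSL_apply_apply] at h5
    refine Eq.trans ?_ (h5.trans ?_)
    · rfl
    · simp [he]
  unfold lap
  rw [Finset.sum_congr rfl fun i _ => key (EuclideanSpace.single i 1) (by simp),
    Finset.sum_add_distrib]
  simp
  ring

lemma Nder_add_sq (n : ℕ) {u : E n → ℝ} {x : E n} (hu : ContDiffAt ℝ 2 u x) (c : ℝ) :
    Nder n (fun y => u y + c * ‖y‖ ^ 2) x = Nder n u x + 2 * c * ‖x‖ ^ 2 := by
  have := (hu.differentiableAt (by simp)).hasFDerivAt.fun_add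
        ((hasStrictFDerivAt_norm_sq x).hasFDerivAt.const_mul c)
  unfold Nder
  rw [HasFDerivAt.fderiv this]
  simp
  ring

/-- Weak maximum principle for `H`-harmonic functions on a ball of radius `r ≤ 1`. The function
`‖x‖²` is strictly `H`-subharmonic, so `v + ε‖x‖²` has no interior maximum. -/
lemma max_principle (n : ℕ) (hn : 3 ≤ n) {r : ℝ} (hr0 : 0 ≤ r) (hr : r ≤ 1) {v : E n → ℝ} {M : ℝ}
    (hc : ContinuousOn v (closedBall (0 : E n) r)) (hd : ContDiffOn ℝ 2 v (ball (0 : E n) r))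
    (hD : ∀ x ∈ ball (0 : E n) r,
      (1 - ‖x‖ ^ 2) ^ 2 * lap n v x + 2 * ((n : ℝ) - 2) * (1 - ‖x‖ ^ 2) * Nder n v x = 0)
    (hM : ∀ x ∈ sphere (0 : E n) r, v x ≤ M) :
    ∀ x ∈ closedBall (0 : E n) r, v x ≤ M := by
  have main : ∀ ε > 0, ∀ x ∈ closedBall (0 : E n) r, v x ≤ M + ε * r ^ 2 := by
    intro ε hε x hx
    set w : E n → ℝ := fun y => v y + ε * ‖y‖ ^ 2 with hw
    have hwc : ContinuousOn w (closedBall (0 : E n) r) := hc.add (by fun_prop)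
    obtain ⟨x₀, hx₀, hmax⟩ := (isCompact_closedBall (0 : E n) r).exists_isMaxOn ⟨x, hx⟩ hwc
    have hle : v x ≤ w x₀ := by
      have h := hmax hx
      have h' : w x ≤ w x₀ := h
      have : v x ≤ w x := by simp only [hw]; nlinarith [sq_nonneg ‖x‖]
      linarith
    rcases (mem_closedBall_zero_iff.1 hx₀).lt_or_eq with hlt | heq
    · exfalso
      have hxb : x₀ ∈ ball (0 : E n) r := mem_ball_zero_iff.2 hlt
      have hv2 : ContDiffAt ℝ 2 v x₀ := hd.contDiffAt (isOpen_ball.mem_nhds hxb)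
      have hw2 : ContDiffAt ℝ 2 w x₀ := hv2.add (contDiffAt_const.mul (contDiff_norm_sq ℝ).contDiffAt)
      have hloc : IsLocalMax w x₀ := by
        filter_upwards [isOpen_ball.mem_nhds hxb] with y hy
        exact hmax (ball_subset_closedBall hy)
      have hl := lap_nonpos_of_isLocalMax n hw2 hloc
      have hN : Nder n w x₀ = 0 := by simp [Nder, hloc.fderiv_eq_zero]
      rw [hw, lap_add_sq n hv2] at hl
      rw [hw, Nder_add_sq n hv2] at hN
      have hN' : Nder n v x₀ = -(2 * ε * ‖x₀‖ ^ 2) := by linarith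
      have hn' : (3 : ℝ) ≤ n := by exact_mod_cast hn
      have ha : 0 < 1 - ‖x₀‖ ^ 2 := by nlinarith [norm_nonneg x₀]
      have hDx := hD x₀ hxb
      rw [hN'] at hDx
      have h1 : (1 - ‖x₀‖ ^ 2) ^ 2 * lap n v x₀ < 0 := by
        apply mul_neg_of_pos_of_neg (by positivity)
        have : 0 < 2 * (n : ℝ) * ε := by positivity
        linarith
      have h2 : 0 ≤ 2 * ((n : ℝ) - 2) * (1 - ‖x₀‖ ^ 2) * (2 * ε * ‖x₀‖ ^ 2) := by
        have : 0 ≤ (n : ℝ) - 2 := by linarith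
        positivity
      linarith
    · have := hM x₀ (mem_sphere_zero_iff_norm.2 heq)
      have hw0 : w x₀ = v x₀ + ε * r ^ 2 := by simp [hw, heq]
      linarith
  intro x hx
  refine le_of_forall_pos_le_add fun δ hδ => ?_
  have h1 := main δ hδ x hx
  have : δ * r ^ 2 ≤ δ := by nlinarith [mul_nonneg hr0 (sub_nonneg.2 hr), hδ.le]
  linarith

/-! ### Integrals over the sphere depending on a parameter -/

/-- Bound on a compact set used for dominated convergence near a point of the ball. -/
lemma exists_bound {F : Type*} [NormedAddCommGroup F] (n : ℕ) {G : E n → E n → F}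
    (hG : ContinuousOn (fun p : E n × E n => G p.1 p.2) (ball (0 : E n) 1 ×ˢ sphere (0 : E n) 1))
    {x : E n} (hx : x ∈ ball (0 : E n) 1) :
    ∃ ρ, x ∈ ball (0 : E n) ρ ∧ ρ < 1 ∧
      ∃ C : ℝ, ∀ y ∈ ball (0 : E n) ρ, ∀ ξ ∈ sphere (0 : E n) 1, ‖G y ξ‖ ≤ C := by
  obtain ⟨ρ, h1, h2⟩ := exists_between (mem_ball_zero_iff.1 hx)
  refine ⟨ρ, mem_ball_zero_iff.2 h1, h2, ?_⟩
  have hcomp : IsCompact (closedBall (0 : E n) ρ ×ˢ sphere (0 : E n) 1) :=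
    (isCompact_closedBall _ _).prod (isCompact_sphere _ _)
  obtain ⟨C, hC⟩ := hcomp.exists_bound_of_continuousOn
    (hG.mono (prod_mono_left (closedBall_subset_ball h2)))
  exact ⟨C, fun y hy ξ hξ => hC (y, ξ) ⟨ball_subset_closedBall hy, hξ⟩⟩

lemma slice_continuousOn {F : Type*} [NormedAddCommGroup F] (n : ℕ) {G : E n → E n → F}
    (hG : ContinuousOn (fun p : E n × E n => G p.1 p.2) (ball (0 : E n) 1 ×ˢ sphere (0 : E n) 1))
    {x : E n} (hx : x ∈ ball (0 : E n) 1) : ContinuousOn (G x) (sphere (0 : E n) 1) :=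
  hG.comp (f := fun ξ => (x, ξ)) (by fun_prop) fun _ hξ => ⟨hx, hξ⟩

lemma param_continuousOn {F : Type*} [NormedAddCommGroup F] [NormedSpace ℝ F] (n : ℕ) (hn : 3 ≤ n)
    {G : E n → E n → F}
    (hG : ContinuousOn (fun p : E n × E n => G p.1 p.2) (ball (0 : E n) 1 ×ˢ sphere (0 : E n) 1)) :
    ContinuousOn (fun x => ∫ ξ, G x ξ ∂(sphMeasure n)) (ball (0 : E n) 1) := by
  have := sphMeasure_isProb n hn
  intro x hx
  obtain ⟨ρ, hxρ, hρ, C, hC⟩ := exists_bound n hG hx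
  have hsub : ball (0 : E n) ρ ⊆ ball (0 : E n) 1 := ball_subset_ball hρ.le
  have h : ContinuousOn (fun x => ∫ ξ, G x ξ ∂(sphMeasure n)) (ball (0 : E n) ρ) := by
    refine continuousOn_of_dominated (bound := fun _ => C) ?_ ?_ (integrable_const C) ?_
    · exact fun y hy =>
        (integrable_of_continuousOn_sphere n hn (slice_continuousOn n hG (hsub hy))).1
    · intro y hy
      filter_upwards [ae_mem_sphere n] with ξ hξ using hC y hy ξ hξ
    · filter_upwards [ae_mem_sphere n] with ξ hξ
      exact hG.comp (f := fun y => (y, ξ)) (by fun_prop) fun _ hy => ⟨hsub hy, hξ⟩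
  exact (h.continuousAt (isOpen_ball.mem_nhds hxρ)).continuousWithinAt

/-- Differentiation under the integral sign over the sphere. -/
lemma param_hasFDerivAt {F : Type*} [NormedAddCommGroup F] [NormedSpace ℝ F]
    (n : ℕ) (hn : 3 ≤ n) {G : E n → E n → F} {G' : E n → E n → E n →L[ℝ] F}
    (hG : ContinuousOn (fun p : E n × E n => G p.1 p.2) (ball (0 : E n) 1 ×ˢ sphere (0 : E n) 1))
    (hG' : ContinuousOn (fun p : E n × E n => G' p.1 p.2) (ball (0 : E n) 1 ×ˢ sphere (0 : E n) 1))
    (hd : ∀ x ∈ ball (0 : E n) 1, ∀ ξ ∈ sphere (0 : E n) 1,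
      HasFDerivAt (fun y => G y ξ) (G' x ξ) x)
    {x : E n} (hx : x ∈ ball (0 : E n) 1) :
    HasFDerivAt (fun x => ∫ ξ, G x ξ ∂(sphMeasure n)) (∫ ξ, G' x ξ ∂(sphMeasure n)) x := by
  have := sphMeasure_isProb n hn
  obtain ⟨ρ, hxρ, hρ, C, hC⟩ := exists_bound n hG' hx
  have hsub : ball (0 : E n) ρ ⊆ ball (0 : E n) 1 := ball_subset_ball hρ.le
  refine hasFDerivAt_integral_of_dominated_of_fderiv_le (bound := fun _ => C)
    (isOpen_ball.mem_nhds hxρ) ?_ ?_ ?_ ?_ (integrable_const C) ?_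
  · filter_upwards [isOpen_ball.mem_nhds hx] with y hy
    exact (integrable_of_continuousOn_sphere n hn (slice_continuousOn n hG hy)).1
  · exact integrable_of_continuousOn_sphere n hn (slice_continuousOn n hG hx)
  · exact (integrable_of_continuousOn_sphere n hn (slice_continuousOn n hG' hx)).1
  · filter_upwards [ae_mem_sphere n] with ξ hξ y hy using hC y hy ξ hξ
  · filter_upwards [ae_mem_sphere n] with ξ hξ y hy using hd y (hsub hy) ξ hξ

/-! ### The hyperbolic Poisson kernel -/

lemma Ph_contDiffAt (n : ℕ) {p : E n × E n} (hp : p.1 ≠ p.2) (m : WithTop ℕ∞) :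
    ContDiffAt ℝ m (fun q : E n × E n => Ph n q.1 q.2) p := by
  have h : ‖p.1 - p.2‖ ^ 2 ≠ 0 := by
    have := norm_pos_iff.2 (sub_ne_zero.2 hp); positivity
  unfold Ph
  exact ((contDiffAt_const.sub (contDiffAt_fst.norm_sq ℝ)).div
    ((contDiffAt_fst.sub contDiffAt_snd).norm_sq ℝ) h).pow _

/-- The derivative of the kernel in its first variable. -/
def Ph1 (n : ℕ) (x ξ : E n) : E n →L[ℝ] ℝ := fderiv ℝ (fun y => Ph n y ξ) x

/-- The second derivative of the kernel in its first variable. -/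
def Ph2 (n : ℕ) (x ξ : E n) : E n →L[ℝ] E n →L[ℝ] ℝ := fderiv ℝ (fun y => Ph1 n y ξ) x

lemma Ph1_contDiffAt (n : ℕ) {p : E n × E n} (hp : p.1 ≠ p.2) (m : ℕ) :
    ContDiffAt ℝ m (fun q : E n × E n => Ph1 n q.1 q.2) p := by
  have h : ContDiffAt ℝ (m + 1)
      (Function.uncurry fun (q : E n × E n) (y : E n) => Ph n y q.2) (p, p.1) :=
    (Ph_contDiffAt n (p := (p.1, p.2)) hp (m + 1)).comp (p, p.1)
      (f := fun z : (E n × E n) × E n => (z.2, z.1.2)) (by fun_prop)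
  exact h.fderiv contDiffAt_fst le_rfl

lemma Ph2_contDiffAt (n : ℕ) {p : E n × E n} (hp : p.1 ≠ p.2) (m : ℕ) :
    ContDiffAt ℝ m (fun q : E n × E n => Ph2 n q.1 q.2) p := by
  have h : ContDiffAt ℝ ((m + 1 : ℕ) : WithTop ℕ∞)
      (Function.uncurry fun (q : E n × E n) (y : E n) => Ph1 n y q.2) (p, p.1) :=
    (Ph1_contDiffAt n (p := (p.1, p.2)) hp (m + 1)).comp (p, p.1)
      (f := fun z : (E n × E n) × E n => (z.2, z.1.2)) (by fun_prop)
  exact h.fderiv contDiffAt_fst (by push_cast; exact le_rfl)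

lemma ball_ne_sphere {n : ℕ} {x ξ : E n} (hx : x ∈ ball (0 : E n) 1)
    (hξ : ξ ∈ sphere (0 : E n) 1) : x ≠ ξ := by
  rintro rfl
  rw [mem_ball_zero_iff] at hx
  rw [mem_sphere_zero_iff_norm] at hξ
  linarith

lemma Ph_hasFDerivAt (n : ℕ) {x ξ : E n} (h : x ≠ ξ) :
    HasFDerivAt (fun y => Ph n y ξ) (Ph1 n x ξ) x := by
  have h1 : ContDiffAt ℝ 1 (fun y => Ph n y ξ) x :=
    (Ph_contDiffAt n (p := (x, ξ)) h 1).comp x (f := fun y => (y, ξ)) (by fun_prop)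
  exact (h1.differentiableAt (by simp)).hasFDerivAt

lemma Ph1_hasFDerivAt (n : ℕ) {x ξ : E n} (h : x ≠ ξ) :
    HasFDerivAt (fun y => Ph1 n y ξ) (Ph2 n x ξ) x := by
  have h1 : ContDiffAt ℝ (1 : ℕ) (fun y => Ph1 n y ξ) x :=
    (Ph1_contDiffAt n (p := (x, ξ)) h 1).comp x (f := fun y => (y, ξ)) (by fun_prop)
  exact (h1.differentiableAt (by simp)).hasFDerivAt

/-- Second derivative at `0` of the `m`-th power of a quotient of two quadratic polynomials; this
is the kernel along a line. -/
lemma deriv_deriv_quot_pow (m : ℕ) (a b α β : ℝ) (hb : b ≠ 0) :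
    deriv (deriv (fun t : ℝ => ((a - 2 * α * t - t ^ 2) / (b + 2 * β * t + t ^ 2)) ^ (m + 2))) 0 =
      (m + 2) * (m + 1) * (a / b) ^ m * (-2 * α / b - 2 * a * β / b ^ 2) ^ 2 +
      (m + 2) * (a / b) ^ (m + 1) *
        (-2 / b + 8 * α * β / b ^ 2 - 2 * a / b ^ 2 + 8 * a * β ^ 2 / b ^ 3) := by
  have hA : ∀ t : ℝ, HasDerivAt (fun t : ℝ => a - 2 * α * t - t ^ 2) (-2 * α - 2 * t) t := by
    intro t
    have := (((hasDerivAt_id t).const_mul (2 * α)).const_sub a).fun_sub (hasDerivAt_pow 2 t)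
    refine this.congr_deriv ?_
    simp
  have hB : ∀ t : ℝ, HasDerivAt (fun t : ℝ => b + 2 * β * t + t ^ 2) (2 * β + 2 * t) t := by
    intro t
    have := (((hasDerivAt_id t).const_mul (2 * β)).const_add b).fun_add (hasDerivAt_pow 2 t)
    refine this.congr_deriv ?_
    simp
  have hev : ∀ᶠ t in 𝓝 (0 : ℝ), b + 2 * β * t + t ^ 2 ≠ 0 :=
    (hB 0).continuousAt.eventually_ne (by simpa using hb)
  have hq : ∀ t : ℝ, b + 2 * β * t + t ^ 2 ≠ 0 →
      HasDerivAt (fun t : ℝ => (a - 2 * α * t - t ^ 2) / (b + 2 * β * t + t ^ 2))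
        (((-2 * α - 2 * t) * (b + 2 * β * t + t ^ 2) - (a - 2 * α * t - t ^ 2) * (2 * β + 2 * t)) /
          (b + 2 * β * t + t ^ 2) ^ 2) t := fun t ht => (hA t).fun_div (hB t) ht
  have hd : deriv (fun t : ℝ => ((a - 2 * α * t - t ^ 2) / (b + 2 * β * t + t ^ 2)) ^ (m + 2))
      =ᶠ[𝓝 0] fun t => ((m + 2 : ℕ) : ℝ) *
        ((a - 2 * α * t - t ^ 2) / (b + 2 * β * t + t ^ 2)) ^ (m + 1) *
        (((-2 * α - 2 * t) * (b + 2 * β * t + t ^ 2) - (a - 2 * α * t - t ^ 2) * (2 * β + 2 * t)) /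
          (b + 2 * β * t + t ^ 2) ^ 2) := by
    filter_upwards [hev] with t ht
    exact ((hq t ht).fun_pow (m + 2)).deriv
  rw [hd.deriv_eq]
  have hb0 : b + 2 * β * 0 + 0 ^ 2 ≠ 0 := by simpa using hb
  have h2 : ∀ t : ℝ, HasDerivAt (fun t : ℝ => -2 * α - 2 * t) (-2) t := by
    intro t
    refine (((hasDerivAt_id t).const_mul 2).const_sub (-2 * α)).congr_deriv ?_
    simp
  have h3 : ∀ t : ℝ, HasDerivAt (fun t : ℝ => 2 * β + 2 * t) 2 t := by
    intro t
    refine (((hasDerivAt_id t).const_mul 2).const_add (2 * β)).congr_deriv ?_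
    simp
  have hnum := (((h2 0).fun_mul (hB 0)).fun_sub ((hA 0).fun_mul (h3 0))).fun_div
    ((hB 0).fun_pow 2) (pow_ne_zero 2 hb0)
  have hfin := (((hq 0 hb0).fun_pow (m + 1)).const_mul ((m + 2 : ℕ) : ℝ)).fun_mul hnum
  rw [hfin.deriv]
  push_cast
  simp only [mul_zero, add_zero, sub_zero, ne_eq, OfNat.ofNat_ne_zero,
    not_false_eq_true, zero_pow]
  rw [pow_succ (a / b) m]
  field_simp
  ring

lemma inner_eq_of_sphere {n : ℕ} {x ξ : E n} (hξ : ‖ξ‖ = 1) :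
    inner ℝ x (x - ξ) = (‖x - ξ‖ ^ 2 - (1 - ‖x‖ ^ 2)) / 2 := by
  rw [norm_sub_sq_real, inner_sub_right, real_inner_self_eq_norm_sq, hξ]
  ring

lemma sum_coord_sq (n : ℕ) (x : E n) : ∑ i, x i ^ 2 = ‖x‖ ^ 2 := by
  rw [EuclideanSpace.norm_sq_eq]; simp

lemma sum_coord_mul (n : ℕ) (x y : E n) : ∑ i, x i * y i = inner ℝ x y := by
  rw [PiLp.inner_apply]; simp [mul_comm]

lemma norm_add_single (n : ℕ) (x : E n) (i : Fin n) (t : ℝ) :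
    ‖x + t • EuclideanSpace.single i (1 : ℝ)‖ ^ 2 = ‖x‖ ^ 2 + 2 * x i * t + t ^ 2 := by
  have h : inner ℝ x (EuclideanSpace.single i (1 : ℝ)) = x i := by
    rw [EuclideanSpace.inner_single_right]; simp
  rw [norm_add_sq_real, inner_smul_right, norm_smul, h]
  simp
  ring

/-- The hyperbolic Poisson kernel is `H`-harmonic. With `a = 1 - ‖x‖²` and `b = ‖x - ξ‖²`, every
inner product occurring in the computation is a polynomial in `a` and `b`. -/
lemma Ph_HHarmonic (n : ℕ) (hn : 3 ≤ n) {ξ : E n} (hξ : ξ ∈ sphere (0 : E n) 1) :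
    HHarmonic n (fun y => Ph n y ξ) := by
  intro x hx
  obtain ⟨m, rfl⟩ : ∃ m, n = m + 3 := ⟨n - 3, by omega⟩
  have hne := ball_ne_sphere hx hξ
  rw [mem_sphere_zero_iff_norm] at hξ
  set a : ℝ := 1 - ‖x‖ ^ 2 with ha
  set b : ℝ := ‖x - ξ‖ ^ 2 with hb
  have hbpos : 0 < b := by have := norm_pos_iff.2 (sub_ne_zero.2 hne); positivity
  have hcd : ContDiffAt ℝ 2 (fun y => Ph (m + 3) y ξ) x :=
    (Ph_contDiffAt (m + 3) (p := (x, ξ)) hne 2).comp x (f := fun y => (y, ξ)) (by fun_prop)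
  have hxx : ‖x‖ ^ 2 = 1 - a := by simp [ha]
  have hin : inner ℝ x (x - ξ) = (b - a) / 2 := inner_eq_of_sphere hξ
  have hlap : lap (m + 3) (fun y => Ph (m + 3) y ξ) x =
      (m + 2) * (m + 1) * (a / b) ^ m *
        (4 * (1 - a) / b ^ 2 + 8 * a / b ^ 3 * ((b - a) / 2) + 4 * a ^ 2 / b ^ 4 * b) +
      (m + 2) * (a / b) ^ (m + 1) *
        ((m + 3) * (-2 / b) + 8 / b ^ 2 * ((b - a) / 2) - (m + 3) * (2 * a / b ^ 2)
          + 8 * a / b ^ 3 * b) := by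
    have hterm : ∀ i : Fin (m + 3),
        fderiv ℝ (fun y => fderiv ℝ (fun y => Ph (m + 3) y ξ) y (EuclideanSpace.single i 1)) x
          (EuclideanSpace.single i 1) =
        (m + 2) * (m + 1) * (a / b) ^ m *
          (4 / b ^ 2 * x i ^ 2 + 8 * a / b ^ 3 * (x i * (x - ξ) i)
            + 4 * a ^ 2 / b ^ 4 * (x - ξ) i ^ 2) +
        (m + 2) * (a / b) ^ (m + 1) *
          (-2 / b + 8 / b ^ 2 * (x i * (x - ξ) i) - 2 * a / b ^ 2
            + 8 * a / b ^ 3 * (x - ξ) i ^ 2) := by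
      intro i
      rw [← line_deriv_deriv _ hcd]
      have hfun : (fun s : ℝ => Ph (m + 3) (x + s • EuclideanSpace.single i (1 : ℝ)) ξ) =
          fun t : ℝ => ((a - 2 * x i * t - t ^ 2) / (b + 2 * (x - ξ) i * t + t ^ 2)) ^ (m + 2) := by
        funext t
        simp only [Ph]
        rw [add_sub_right_comm, norm_add_single, norm_add_single]
        congr 2
        rw [ha]; ring
      rw [hfun, deriv_deriv_quot_pow m a b _ _ hbpos.ne']
      field_simp
      ring
    unfold lap
    rw [Finset.sum_congr rfl fun i _ => hterm i, Finset.sum_add_distrib, ← Finset.mul_sum,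
      ← Finset.mul_sum]
    simp only [Finset.sum_add_distrib, Finset.sum_sub_distrib, ← Finset.mul_sum, sum_coord_sq,
      sum_coord_mul, hin, hxx, Finset.sum_const, Finset.card_univ, Fintype.card_fin, nsmul_eq_mul]
    rw [← hb]
    push_cast
    ring
  have hN : Nder (m + 3) (fun y => Ph (m + 3) y ξ) x =
      (m + 2) * (a / b) ^ (m + 1) * (-2 * (1 - a) / b - a * (b - a) / b ^ 2) := by
    have hline := (line_hasDerivAt (m + 3) hcd x).self_of_nhds.deriv
    rw [zero_smul, add_zero] at hline
    have hfun : (fun s : ℝ => Ph (m + 3) (x + s • x) ξ) = fun t : ℝ =>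
        ((a - 2 * (1 - a) * t - (1 - a) * t ^ 2) / (b + (b - a) * t + (1 - a) * t ^ 2)) ^ (m + 2) := by
      funext t
      have e1 : ‖x + t • x‖ ^ 2 = (1 + t) ^ 2 * (1 - a) := by
        rw [show x + t • x = (1 + t) • x by module, norm_smul, mul_pow, Real.norm_eq_abs, sq_abs,
          hxx]
      have e2 : ‖x - ξ + t • x‖ ^ 2 = b + (b - a) * t + (1 - a) * t ^ 2 := by
        rw [norm_add_sq_real, inner_smul_right, real_inner_comm, hin, norm_smul, mul_pow,
          Real.norm_eq_abs, sq_abs, hxx]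
        ring
      simp only [Ph]
      rw [add_sub_right_comm, e1, e2]
      congr 2
      ring
    have hA : HasDerivAt (fun t : ℝ => a - 2 * (1 - a) * t - (1 - a) * t ^ 2) (-2 * (1 - a)) 0 := by
      refine ((((hasDerivAt_id (0 : ℝ)).const_mul (2 * (1 - a))).const_sub a).fun_sub
        ((hasDerivAt_pow 2 (0 : ℝ)).const_mul (1 - a))).congr_deriv ?_
      simp
    have hB : HasDerivAt (fun t : ℝ => b + (b - a) * t + (1 - a) * t ^ 2) (b - a) 0 := by
      refine ((((hasDerivAt_id (0 : ℝ)).const_mul (b - a)).const_add b).fun_add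
        ((hasDerivAt_pow 2 (0 : ℝ)).const_mul (1 - a))).congr_deriv ?_
      simp
    have hq := ((hA.fun_div hB (by simpa using hbpos.ne')).fun_pow (m + 2)).deriv
    rw [Nder, ← hline, hfun, hq]
    push_cast
    simp only [mul_zero, add_zero, sub_zero, ne_eq, OfNat.ofNat_ne_zero,
      not_false_eq_true, zero_pow]
    field_simp
  rw [hlap, hN]
  push_cast
  rw [pow_succ (a / b) m]
  field_simp
  ring

/-! ### The hyperbolic Poisson integral -/

/-- The hyperbolic Poisson integral `P_h[φ]`. -/
def poissonInt (n : ℕ) (φ : E n → ℝ) (x : E n) : ℝ := ∫ ξ, φ ξ * Ph n x ξ ∂(sphMeasure n)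

lemma kernel0_continuousOn (n : ℕ) {φ : E n → ℝ} (hφ : ContinuousOn φ (sphere (0 : E n) 1)) :
    ContinuousOn (fun p : E n × E n => φ p.2 * Ph n p.1 p.2)
      (ball (0 : E n) 1 ×ˢ sphere (0 : E n) 1) := by
  have h : ContinuousOn (fun p : E n × E n => Ph n p.1 p.2)
      (ball (0 : E n) 1 ×ˢ sphere (0 : E n) 1) := fun p hp =>
    (Ph_contDiffAt n (ball_ne_sphere hp.1 hp.2) 0).continuousAt.continuousWithinAt
  exact (hφ.comp continuousOn_snd fun p hp => hp.2).mul h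

lemma kernel1_continuousOn (n : ℕ) {φ : E n → ℝ} (hφ : ContinuousOn φ (sphere (0 : E n) 1)) :
    ContinuousOn (fun p : E n × E n => φ p.2 • Ph1 n p.1 p.2)
      (ball (0 : E n) 1 ×ˢ sphere (0 : E n) 1) := by
  have h : ContinuousOn (fun p : E n × E n => Ph1 n p.1 p.2)
      (ball (0 : E n) 1 ×ˢ sphere (0 : E n) 1) := fun p hp =>
    (Ph1_contDiffAt n (ball_ne_sphere hp.1 hp.2) 0).continuousAt.continuousWithinAt
  exact (hφ.comp continuousOn_snd fun p hp => hp.2).smul h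

lemma kernel2_continuousOn (n : ℕ) {φ : E n → ℝ} (hφ : ContinuousOn φ (sphere (0 : E n) 1)) :
    ContinuousOn (fun p : E n × E n => φ p.2 • Ph2 n p.1 p.2)
      (ball (0 : E n) 1 ×ˢ sphere (0 : E n) 1) := by
  have h : ContinuousOn (fun p : E n × E n => Ph2 n p.1 p.2)
      (ball (0 : E n) 1 ×ˢ sphere (0 : E n) 1) := fun p hp =>
    (Ph2_contDiffAt n (ball_ne_sphere hp.1 hp.2) 0).continuousAt.continuousWithinAt
  exact (hφ.comp continuousOn_snd fun p hp => hp.2).smul h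

lemma poissonInt_hasFDerivAt (n : ℕ) (hn : 3 ≤ n) {φ : E n → ℝ}
    (hφ : ContinuousOn φ (sphere (0 : E n) 1)) {x : E n} (hx : x ∈ ball (0 : E n) 1) :
    HasFDerivAt (poissonInt n φ) (∫ ξ, φ ξ • Ph1 n x ξ ∂(sphMeasure n)) x := by
  have hd : ∀ y ∈ ball (0 : E n) 1, ∀ ξ ∈ sphere (0 : E n) 1,
      HasFDerivAt (fun z => φ ξ * Ph n z ξ) (φ ξ • Ph1 n y ξ) y := fun y hy ξ hξ =>
    (Ph_hasFDerivAt n (ball_ne_sphere hy hξ)).const_mul (φ ξ)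
  exact param_hasFDerivAt n hn (G := fun x ξ => φ ξ * Ph n x ξ) (G' := fun x ξ => φ ξ • Ph1 n x ξ)
    (kernel0_continuousOn n hφ) (kernel1_continuousOn n hφ) hd hx

lemma poissonInt1_hasFDerivAt (n : ℕ) (hn : 3 ≤ n) {φ : E n → ℝ}
    (hφ : ContinuousOn φ (sphere (0 : E n) 1)) {x : E n} (hx : x ∈ ball (0 : E n) 1) :
    HasFDerivAt (fun x => ∫ ξ, φ ξ • Ph1 n x ξ ∂(sphMeasure n))
      (∫ ξ, φ ξ • Ph2 n x ξ ∂(sphMeasure n)) x := by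
  have hd : ∀ y ∈ ball (0 : E n) 1, ∀ ξ ∈ sphere (0 : E n) 1,
      HasFDerivAt (fun z => φ ξ • Ph1 n z ξ) (φ ξ • Ph2 n y ξ) y := fun y hy ξ hξ =>
    (Ph1_hasFDerivAt n (ball_ne_sphere hy hξ)).fun_const_smul (φ ξ)
  exact param_hasFDerivAt n hn (G := fun x ξ => φ ξ • Ph1 n x ξ) (G' := fun x ξ => φ ξ • Ph2 n x ξ)
    (kernel1_continuousOn n hφ) (kernel2_continuousOn n hφ) hd hx

lemma poissonInt_fderiv (n : ℕ) (hn : 3 ≤ n) {φ : E n → ℝ}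
    (hφ : ContinuousOn φ (sphere (0 : E n) 1)) {x : E n} (hx : x ∈ ball (0 : E n) 1) :
    fderiv ℝ (poissonInt n φ) x = ∫ ξ, φ ξ • Ph1 n x ξ ∂(sphMeasure n) :=
  (poissonInt_hasFDerivAt n hn hφ hx).fderiv

lemma poissonInt_contDiffOn (n : ℕ) (hn : 3 ≤ n) {φ : E n → ℝ}
    (hφ : ContinuousOn φ (sphere (0 : E n) 1)) : ContDiffOn ℝ 2 (poissonInt n φ) (ball (0 : E n) 1) := by
  have h1 : ContDiffOn ℝ 1 (fun x => ∫ ξ, φ ξ • Ph1 n x ξ ∂(sphMeasure n)) (ball (0 : E n) 1) := by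
    rw [← zero_add (1 : WithTop ℕ∞), contDiffOn_succ_iff_fderiv_of_isOpen isOpen_ball]
    refine ⟨fun x hx =>
      (poissonInt1_hasFDerivAt n hn hφ hx).differentiableAt.differentiableWithinAt, by simp, ?_⟩
    rw [contDiffOn_zero]
    refine (param_continuousOn n hn (G := fun x ξ => φ ξ • Ph2 n x ξ)
      (kernel2_continuousOn n hφ)).congr fun x hx => ?_
    exact (poissonInt1_hasFDerivAt n hn hφ hx).fderiv
  rw [show (2 : WithTop ℕ∞) = 1 + 1 by norm_num, contDiffOn_succ_iff_fderiv_of_isOpen isOpen_ball]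
  refine ⟨fun x hx =>
    (poissonInt_hasFDerivAt n hn hφ hx).differentiableAt.differentiableWithinAt, by simp, ?_⟩
  exact h1.congr fun x hx => poissonInt_fderiv n hn hφ hx

lemma poissonInt_HHarmonic (n : ℕ) (hn : 3 ≤ n) {φ : E n → ℝ}
    (hφ : ContinuousOn φ (sphere (0 : E n) 1)) : HHarmonic n (poissonInt n φ) := by
  intro x hx
  have i1 : Integrable (fun ξ => φ ξ • Ph1 n x ξ) (sphMeasure n) :=
    integrable_of_continuousOn_sphere n hn (slice_continuousOn n
      (G := fun x ξ => φ ξ • Ph1 n x ξ) (kernel1_continuousOn n hφ) hx)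
  have i2 := integrable_of_continuousOn_sphere n hn (slice_continuousOn n
      (G := fun x ξ => φ ξ • Ph2 n x ξ) (kernel2_continuousOn n hφ) hx)
  have i3 : ∀ e : E n, Integrable (fun ξ => φ ξ * Ph2 n x ξ e e) (sphMeasure n) := fun e =>
    (i2.apply_continuousLinearMap e).apply_continuousLinearMap e
  have i4 : Integrable (fun ξ => φ ξ * Ph1 n x ξ x) (sphMeasure n) :=
    i1.apply_continuousLinearMap x
  have hN : Nder n (poissonInt n φ) x = ∫ ξ, φ ξ * Ph1 n x ξ x ∂(sphMeasure n) := by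
    rw [Nder, poissonInt_fderiv n hn hφ hx, ContinuousLinearMap.integral_apply i1]
    rfl
  have hL : lap n (poissonInt n φ) x = ∫ ξ, ∑ i : Fin n,
      φ ξ * Ph2 n x ξ (EuclideanSpace.single i 1) (EuclideanSpace.single i 1) ∂(sphMeasure n) := by
    rw [integral_finsetSum _ fun i _ => i3 _]
    refine Finset.sum_congr rfl fun i _ => ?_
    set e : E n := EuclideanSpace.single i 1
    have hev : (fun y => fderiv ℝ (poissonInt n φ) y e) =ᶠ[𝓝 x]
        fun y => (∫ ξ, φ ξ • Ph1 n y ξ ∂(sphMeasure n)) e := by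
      filter_upwards [isOpen_ball.mem_nhds hx] with y hy
      rw [poissonInt_fderiv n hn hφ hy]
    rw [hev.fderiv_eq]
    have h2 := ((poissonInt1_hasFDerivAt n hn hφ hx).clm_apply (hasFDerivAt_const e x)).fderiv
    rw [h2]
    simp only [ContinuousLinearMap.comp_zero, zero_add, ContinuousLinearMap.flip_apply]
    rw [ContinuousLinearMap.integral_apply i2,
      ContinuousLinearMap.integral_apply (i2.apply_continuousLinearMap e)]
    rfl
  have hpt : ∀ᵐ ξ ∂(sphMeasure n),
      (1 - ‖x‖ ^ 2) ^ 2 * (∑ i : Fin n,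
        φ ξ * Ph2 n x ξ (EuclideanSpace.single i 1) (EuclideanSpace.single i 1)) +
      2 * ((n : ℝ) - 2) * (1 - ‖x‖ ^ 2) * (φ ξ * Ph1 n x ξ x) = 0 := by
    filter_upwards [ae_mem_sphere n] with ξ hξ
    have hne := ball_ne_sphere hx hξ
    have h := Ph_HHarmonic n hn hξ x hx
    have hl : lap n (fun y => Ph n y ξ) x =
        ∑ i : Fin n, Ph2 n x ξ (EuclideanSpace.single i 1) (EuclideanSpace.single i 1) := by
      refine Finset.sum_congr rfl fun i _ => ?_
      have h2 := ((Ph1_hasFDerivAt n hne).clm_apply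
        (hasFDerivAt_const (EuclideanSpace.single i (1 : ℝ)) x)).fderiv
      have h3 := congrArg (fun L => L (EuclideanSpace.single i (1 : ℝ))) h2
      simpa [Ph1] using h3
    rw [hl] at h
    have hN' : Nder n (fun y => Ph n y ξ) x = Ph1 n x ξ x := rfl
    rw [hN'] at h
    rw [← Finset.mul_sum]
    linear_combination φ ξ * h
  rw [hL, hN, ← integral_const_mul, ← integral_const_mul, ← integral_add]
  · rw [integral_congr_ae hpt, integral_zero]
  · exact (integrable_finsetSum _ fun i _ => i3 _).const_mul _
  · exact i4.const_mul _

lemma Ph_nonneg (n : ℕ) {x : E n} (hx : x ∈ ball (0 : E n) 1) (ξ : E n) : 0 ≤ Ph n x ξ := by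
  have : ‖x‖ < 1 := mem_ball_zero_iff.1 hx
  have h : 0 ≤ 1 - ‖x‖ ^ 2 := by nlinarith [norm_nonneg x]
  unfold Ph
  positivity

lemma Ph_integrable (n : ℕ) (hn : 3 ≤ n) {φ : E n → ℝ} (hφ : ContinuousOn φ (sphere (0 : E n) 1))
    {x : E n} (hx : x ∈ ball (0 : E n) 1) :
    Integrable (fun ξ => φ ξ * Ph n x ξ) (sphMeasure n) :=
  integrable_of_continuousOn_sphere n hn (slice_continuousOn n (G := fun x ξ => φ ξ * Ph n x ξ)
    (kernel0_continuousOn n hφ) hx)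

/-- `P_h[1]` is constant on spheres centred at `0`, since reflections preserve `σ`. -/
lemma poissonInt_one_radial (n : ℕ) {x y : E n} (h : ‖x‖ = ‖y‖) :
    poissonInt n (fun _ => 1) x = poissonInt n (fun _ => 1) y := by
  set R : E n ≃ₗᵢ[ℝ] E n := (ℝ ∙ (x - y))ᗮ.reflection with hR
  have hRx : R x = y := Submodule.reflection_sub h
  unfold poissonInt
  rw [← integral_sphMeasure_comp n R (fun ξ => 1 * Ph n y ξ)]
  refine integral_congr_ae (Eventually.of_forall fun ξ => ?_)
  simp only [Ph]
  rw [← hRx, ← map_sub, R.norm_map, R.norm_map]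

lemma poissonInt_one_zero (n : ℕ) (hn : 3 ≤ n) : poissonInt n (fun _ => 1) 0 = 1 := by
  have := sphMeasure_isProb n hn
  have h : ∀ᵐ ξ ∂(sphMeasure n), (1 : ℝ) * Ph n 0 ξ = 1 := by
    filter_upwards [ae_mem_sphere n] with ξ hξ
    rw [mem_sphere_zero_iff_norm] at hξ
    simp [Ph, hξ]
  unfold poissonInt
  rw [integral_congr_ae h]
  simp

/-- The hyperbolic Poisson kernel has total mass one: `P_h[1]` is `H`-harmonic and constant on the
sphere of radius `‖x‖`, so by the maximum principle its value there is its value `1` at `0`. -/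
lemma poissonInt_one (n : ℕ) (hn : 3 ≤ n) {x : E n} (hx : x ∈ ball (0 : E n) 1) :
    poissonInt n (fun _ => 1) x = 1 := by
  set u := poissonInt n (fun _ => 1) with hu
  have hφ : ContinuousOn (fun _ : E n => (1 : ℝ)) (sphere (0 : E n) 1) := continuousOn_const
  have hx1 : ‖x‖ < 1 := mem_ball_zero_iff.1 hx
  have hC := poissonInt_contDiffOn n hn hφ
  have hH := poissonInt_HHarmonic n hn hφ
  have hsub : ball (0 : E n) ‖x‖ ⊆ ball (0 : E n) 1 := ball_subset_ball hx1.le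
  have hsub' : closedBall (0 : E n) ‖x‖ ⊆ ball (0 : E n) 1 := closedBall_subset_ball hx1
  have h0 : (0 : E n) ∈ closedBall (0 : E n) ‖x‖ := by simp
  have hS : ∀ y ∈ sphere (0 : E n) ‖x‖, u y = u x := fun y hy =>
    poissonInt_one_radial n (mem_sphere_zero_iff_norm.1 hy)
  have hle : u 0 ≤ u x :=
    max_principle n hn (norm_nonneg x) hx1.le (hC.continuousOn.mono hsub') (hC.mono hsub)
      (fun y hy => hH y (hsub hy)) (fun y hy => (hS y hy).le) 0 h0
  have hφ' : ContinuousOn (fun _ : E n => (-1 : ℝ)) (sphere (0 : E n) 1) := continuousOn_const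
  have hneg : poissonInt n (fun _ => (-1 : ℝ)) = fun y => -u y := by
    funext y
    simp only [hu, poissonInt, ← integral_neg, neg_mul]
  have hC' := poissonInt_contDiffOn n hn hφ'
  have hH' := poissonInt_HHarmonic n hn hφ'
  rw [hneg] at hC' hH'
  have hge : -u 0 ≤ -u x :=
    max_principle n hn (norm_nonneg x) hx1.le (hC'.continuousOn.mono hsub') (hC'.mono hsub)
      (fun y hy => hH' y (hsub hy)) (fun y hy => by rw [hS y hy]) 0 h0
  have : u 0 = 1 := poissonInt_one_zero n hn
  linarith

/-- The kernel is an approximate identity: away from `ξ` it is uniformly small as the point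
approaches the boundary, so `P_h[φ]` attains the boundary value `φ ζ` at `ζ`. -/
lemma poissonInt_boundary (n : ℕ) (hn : 3 ≤ n) {φ : E n → ℝ}
    (hφ : ContinuousOn φ (sphere (0 : E n) 1)) {ζ : E n} (hζ : ζ ∈ sphere (0 : E n) 1) :
    Tendsto (poissonInt n φ) (𝓝[ball (0 : E n) 1] ζ) (𝓝 (φ ζ)) := by
  have := sphMeasure_isProb n hn
  obtain ⟨C, hC⟩ := (isCompact_sphere (0 : E n) 1).exists_bound_of_continuousOn hφ
  have hC0 : 0 ≤ C := (norm_nonneg _).trans (hC ζ hζ)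
  rw [Metric.tendsto_nhds]
  intro ε hε
  obtain ⟨δ, hδ, hφδ⟩ := Metric.continuousOn_iff.1 hφ ζ hζ (ε / 2) (by positivity)
  -- the bound for the kernel at points `ξ` of distance at least `δ` from `ζ`
  have hlim : Tendsto (fun x : E n => 2 * C * ((1 - ‖x‖ ^ 2) / (δ / 2) ^ 2) ^ (n - 1))
      (𝓝[ball (0 : E n) 1] ζ) (𝓝 0) := by
    have hcont : Continuous fun x : E n => 2 * C * ((1 - ‖x‖ ^ 2) / (δ / 2) ^ 2) ^ (n - 1) := by
      fun_prop
    have h := (hcont.tendsto ζ).mono_left (nhdsWithin_le_nhds (s := ball (0 : E n) 1))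
    rw [mem_sphere_zero_iff_norm.1 hζ] at h
    have hn1 : n - 1 ≠ 0 := by omega
    simpa [hn1] using h
  have hnear : ∀ᶠ x in 𝓝[ball (0 : E n) 1] ζ, dist x ζ < δ / 2 :=
    nhdsWithin_le_nhds (ball_mem_nhds ζ (by positivity))
  filter_upwards [self_mem_nhdsWithin, hnear, hlim.eventually_lt_const (half_pos hε)]
    with x hx hxζ hsmall
  set κ : ℝ := 2 * C * ((1 - ‖x‖ ^ 2) / (δ / 2) ^ 2) ^ (n - 1) with hκ
  have hx1 : ‖x‖ < 1 := mem_ball_zero_iff.1 hx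
  have ha : 0 ≤ 1 - ‖x‖ ^ 2 := by nlinarith [norm_nonneg x]
  have hκ0 : 0 ≤ κ := by positivity
  have hone : ∫ ξ, Ph n x ξ ∂(sphMeasure n) = 1 := by
    simpa [poissonInt] using poissonInt_one n hn hx
  have iP : Integrable (fun ξ => Ph n x ξ) (sphMeasure n) := by
    simpa using Ph_integrable n hn (φ := fun _ => 1) continuousOn_const hx
  have hdiff : poissonInt n φ x - φ ζ = ∫ ξ, (φ ξ - φ ζ) * Ph n x ξ ∂(sphMeasure n) := by
    simp only [sub_mul]
    rw [integral_sub (Ph_integrable n hn hφ hx) (iP.const_mul _), integral_const_mul, hone, mul_one]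
    rfl
  have hbound : ∀ᵐ ξ ∂(sphMeasure n), ‖(φ ξ - φ ζ) * Ph n x ξ‖ ≤ ε / 2 * Ph n x ξ + κ := by
    filter_upwards [ae_mem_sphere n] with ξ hξ
    have hP := Ph_nonneg n hx ξ
    rw [norm_mul, Real.norm_of_nonneg hP]
    rcases lt_or_ge (dist ξ ζ) δ with hlt | hge
    · have h := (hφδ ξ hξ hlt).le
      rw [Real.dist_eq, ← Real.norm_eq_abs] at h
      nlinarith [mul_le_mul_of_nonneg_right h hP]
    · have hdist : δ / 2 ≤ ‖x - ξ‖ := by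
        have h1 := dist_triangle ξ x ζ
        rw [dist_comm ξ x] at h1
        rw [← dist_eq_norm]
        linarith
      have hPle : Ph n x ξ ≤ ((1 - ‖x‖ ^ 2) / (δ / 2) ^ 2) ^ (n - 1) := by
        unfold Ph
        gcongr
      have h2 : ‖φ ξ - φ ζ‖ ≤ 2 * C := by
        have := norm_sub_le (φ ξ) (φ ζ)
        linarith [hC ξ hξ, hC ζ hζ]
      have h3 : ‖φ ξ - φ ζ‖ * Ph n x ξ ≤ κ := mul_le_mul h2 hPle hP (by positivity)
      have : 0 ≤ ε / 2 * Ph n x ξ := by positivity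
      linarith
  have ib : Integrable (fun ξ => ε / 2 * Ph n x ξ + κ) (sphMeasure n) :=
    (iP.const_mul _).add (integrable_const _)
  rw [dist_eq_norm, hdiff]
  refine (norm_integral_le_of_norm_le ib hbound).trans_lt ?_
  rw [integral_add (iP.const_mul _) (integrable_const _), integral_const_mul, hone]
  simp
  linarith

/-! ### Comparison and the Dirichlet problem -/

lemma lap_congr (n : ℕ) {u v : E n → ℝ} {x : E n} (h : u =ᶠ[𝓝 x] v) : lap n u x = lap n v x := by
  refine Finset.sum_congr rfl fun i _ => ?_
  have : (fun y => fderiv ℝ u y (EuclideanSpace.single i 1)) =ᶠ[𝓝 x]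
      fun y => fderiv ℝ v y (EuclideanSpace.single i 1) :=
    (h.fderiv (𝕜 := ℝ)).mono fun y hy => by simp only [hy]
  rw [this.fderiv_eq]

lemma lap_sub (n : ℕ) {u v : E n → ℝ} {x : E n} (hu : ContDiffAt ℝ 2 u x)
    (hv : ContDiffAt ℝ 2 v x) : lap n (fun y => u y - v y) x = lap n u x - lap n v x := by
  unfold lap
  rw [← Finset.sum_sub_distrib]
  refine Finset.sum_congr rfl fun i _ => ?_
  set e : E n := EuclideanSpace.single i 1
  have hd : ∀ {w : E n → ℝ}, ContDiffAt ℝ 2 w x →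
      DifferentiableAt ℝ (fun y => fderiv ℝ w y e) x := fun hw =>
    ((hw.fderiv_right (m := 1) (by norm_num)).clm_apply contDiffAt_const).differentiableAt
      (by simp)
  have hev : (fun y => fderiv ℝ (fun y => u y - v y) y e) =ᶠ[𝓝 x]
      fun y => fderiv ℝ u y e - fderiv ℝ v y e := by
    filter_upwards [hu.eventually (by simp), hv.eventually (by simp)] with y h1 h2
    rw [fderiv_fun_sub (h1.differentiableAt (by simp)) (h2.differentiableAt (by simp))]
    rfl
  rw [hev.fderiv_eq, fderiv_fun_sub (hd hu) (hd hv)]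
  rfl

/-- Comparison of two `H`-harmonic functions through their boundary values. -/
lemma le_of_boundary_eq (n : ℕ) (hn : 3 ≤ n) {u v : E n → ℝ}
    (hu : ContinuousOn u (closedBall (0 : E n) 1)) (hu2 : ContDiffOn ℝ 2 u (ball (0 : E n) 1))
    (huH : HHarmonic n u)
    (hv : ContinuousOn v (closedBall (0 : E n) 1)) (hv2 : ContDiffOn ℝ 2 v (ball (0 : E n) 1))
    (hvH : HHarmonic n v) (h : ∀ ξ ∈ sphere (0 : E n) 1, v ξ = u ξ) :
    ∀ x ∈ closedBall (0 : E n) 1, v x ≤ u x := by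
  intro x hx
  have := max_principle n hn zero_le_one le_rfl (v := fun y => v y - u y) (M := 0) (hv.sub hu)
    (hv2.sub hu2) (fun y hy => ?_) (fun y hy => by rw [h y hy, sub_self]) x hx
  · linarith
  · have c1 := hv2.contDiffAt (isOpen_ball.mem_nhds hy)
    have c2 := hu2.contDiffAt (isOpen_ball.mem_nhds hy)
    have hN : Nder n (fun y => v y - u y) y = Nder n v y - Nder n u y := by
      unfold Nder
      rw [fderiv_fun_sub (c1.differentiableAt (by simp)) (c2.differentiableAt (by simp))]
      rfl
    rw [lap_sub n c1 c2, hN]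
    linear_combination hvH y hy - huH y hy

/-- For every continuous `φ` on `S^{n-1}`, the Dirichlet problem `Du = 0` in
`B_n`, `u = φ` on `S^{n-1}`, has a unique solution continuous on the closed unit ball, and this
solution is given on `B_n` by the hyperbolic Poisson integral `P_h[φ]`. -/
theorem stmt0 (n : ℕ) (hn : 3 ≤ n) (φ : E n → ℝ)
    (hφ : ContinuousOn φ (sphere (0 : E n) 1)) :
    ∃ u : E n → ℝ,
      (ContinuousOn u (closedBall (0 : E n) 1) ∧ ContDiffOn ℝ 2 u (ball (0 : E n) 1) ∧
        HHarmonic n u ∧ (∀ ξ ∈ sphere (0 : E n) 1, u ξ = φ ξ) ∧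
        (∀ x ∈ ball (0 : E n) 1, u x = ∫ ξ, φ ξ * Ph n x ξ ∂(sphMeasure n))) ∧
      (∀ v : E n → ℝ,
        ContinuousOn v (closedBall (0 : E n) 1) → ContDiffOn ℝ 2 v (ball (0 : E n) 1) →
        HHarmonic n v → (∀ ξ ∈ sphere (0 : E n) 1, v ξ = φ ξ) →
        EqOn v u (closedBall (0 : E n) 1)) := by
  classical
  set u : E n → ℝ := fun x => if x ∈ ball (0 : E n) 1 then poissonInt n φ x else φ x with hu
  have hin : ∀ x ∈ ball (0 : E n) 1, u x = poissonInt n φ x := fun x hx => if_pos hx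
  have hbd : ∀ ξ ∈ sphere (0 : E n) 1, u ξ = φ ξ := fun ξ hξ =>
    if_neg fun hb => ball_ne_sphere hb hξ rfl
  have hev : ∀ x ∈ ball (0 : E n) 1, u =ᶠ[𝓝 x] poissonInt n φ := fun x hx =>
    Filter.eventuallyEq_of_mem (isOpen_ball.mem_nhds hx) hin
  have hC2 : ContDiffOn ℝ 2 u (ball (0 : E n) 1) :=
    (poissonInt_contDiffOn n hn hφ).congr hin
  have hHH : HHarmonic n u := by
    intro x hx
    have hN : Nder n u x = Nder n (poissonInt n φ) x := by
      unfold Nder; rw [(hev x hx).fderiv_eq]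
    rw [lap_congr n (hev x hx), hN]
    exact poissonInt_HHarmonic n hn hφ x hx
  have hcont : ContinuousOn u (closedBall (0 : E n) 1) := by
    intro x hx
    rcases (mem_closedBall_zero_iff.1 hx).lt_or_eq with hlt | heq
    · have hxb : x ∈ ball (0 : E n) 1 := mem_ball_zero_iff.2 hlt
      exact (hC2.continuousOn.continuousAt (isOpen_ball.mem_nhds hxb)).continuousWithinAt
    · have hxs : x ∈ sphere (0 : E n) 1 := mem_sphere_zero_iff_norm.2 heq
      rw [← ball_union_sphere, ContinuousWithinAt, nhdsWithin_union, tendsto_sup, hbd x hxs]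
      constructor
      · exact (poissonInt_boundary n hn hφ hxs).congr'
          (Filter.eventuallyEq_of_mem self_mem_nhdsWithin fun y hy => (hin y hy).symm)
      · exact (hφ x hxs).tendsto.congr'
          (Filter.eventuallyEq_of_mem self_mem_nhdsWithin fun y hy => (hbd y hy).symm)
  refine ⟨u, ⟨hcont, hC2, hHH, hbd, fun x hx => hin x hx⟩, ?_⟩
  intro v hv hv2 hvH hvb x hx
  have heq : ∀ ξ ∈ sphere (0 : E n) 1, v ξ = u ξ := fun ξ hξ => (hvb ξ hξ).trans (hbd ξ hξ).symm
  exact le_antisymm (le_of_boundary_eq n hn hcont hC2 hHH hv hv2 hvH heq x hx)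
    (le_of_boundary_eq n hn hv hv2 hvH hcont hC2 hHH (fun ξ hξ => (heq ξ hξ).symm) x hx)
end
end

section
/- Let l ≥ 0 be an integer and P : ℝⁿ → ℝ a harmonic polynomial (ΔP = 0) that is homogeneous of degree l. Then the function u(x) = F_l(|x|²)·P(x) is H-harmonic on B_n, i.e. (1-|x|²)²Δu(x) + 2(n-2)(1-|x|²)Nu(x) = 0 for all x ∈ B_n. -/
/-!
Write `ρ = |x|²` and `u = F(ρ) P`. Since `P` is harmonic and, by Euler's identity, `NP = l P`,
the product rule gives (`lap_radial_mul`)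

  `Δu = (4ρ F'' + (2n + 4l) F') P` and `Nu = (2ρ F' + l F) P`,

so that `(1-ρ)²Δu + 2(n-2)(1-ρ)Nu` equals `4(1-ρ)P` times

  `ρ(1-ρ) F'' + (γ - (a+b+1)ρ) F' - ab F`, with `a = l`, `b = 1 - n/2`, `γ = l + n/2`.

This is the hypergeometric operator applied to `F`, and it vanishes for `F = ₂F₁(a, b, γ)`
(`hypergeometric_ode`): the coefficients satisfy `(k+1)(γ+k) c_{k+1} = (a+k)(b+k) c_k`. The
recursion also makes them bounded (`polyGrowth_of_rec`, as `0 ≤ a ≤ γ` and `b ≤ 1`), so the series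
may be differentiated term by term on `(-1, 1)`. The recursion is used without dividing by `b + k`,
so the terminating series (`l = 0` or `n` even) need no separate treatment.
-/


open MeasureTheory Metric Filter Topology Set
open scoped ContDiff ENNReal NNReal

noncomputable section

/-- `F_l(x) = ₂F₁(l, 1−n/2, l+n/2; x) = Σ_k (l)_k (1−n/2)_k / ((l+n/2)_k k!) xᵏ`. -/
noncomputable def Fl (n l : ℕ) (x : ℝ) : ℝ :=
  ∑' k : ℕ, ((ascPochhammer ℝ k).eval (l : ℝ) * (ascPochhammer ℝ k).eval (1 - (n : ℝ) / 2)) /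
      ((ascPochhammer ℝ k).eval ((l : ℝ) + (n : ℝ) / 2) * (Nat.factorial k)) * x ^ k

/-! ### Power series with coefficients of polynomial growth -/

/-- At most polynomial growth of a coefficient sequence. It forces the power series to converge on
`(-1, 1)` and, unlike boundedness, it is inherited by the coefficients of the derived series. -/
def PolyGrowth (c : ℕ → ℝ) : Prop := ∃ (C : ℝ) (m : ℕ), ∀ k : ℕ, |c k| ≤ C * ((k : ℝ) + 1) ^ m

/-- Coefficients of the derivative of `∑ c k xᵏ`. -/
def dcoef (c : ℕ → ℝ) (k : ℕ) : ℝ := ((k : ℝ) + 1) * c (k + 1)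

/-- The sum of the power series with coefficients `c`. -/
def pser (c : ℕ → ℝ) (x : ℝ) : ℝ := ∑' k : ℕ, c k * x ^ k

lemma PolyGrowth.dcoef {c : ℕ → ℝ} (h : PolyGrowth c) : PolyGrowth (dcoef c) := by
  obtain ⟨C, m, h⟩ := h
  have hC : 0 ≤ C := by
    have := (abs_nonneg _).trans (h 0)
    simpa using this
  refine ⟨C * 2 ^ m, m + 1, fun k => ?_⟩
  have h1 := h (k + 1)
  have hk : (0 : ℝ) ≤ k := Nat.cast_nonneg k
  unfold _root_.dcoef
  rw [abs_mul, abs_of_nonneg (by linarith : (0 : ℝ) ≤ (k : ℝ) + 1)]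
  have h2 : (((k + 1 : ℕ) : ℝ) + 1) ^ m ≤ (2 * ((k : ℝ) + 1)) ^ m := by
    apply pow_le_pow_left₀ (by positivity)
    push_cast; linarith
  calc ((k : ℝ) + 1) * |c (k + 1)| ≤ ((k : ℝ) + 1) * (C * (2 * ((k : ℝ) + 1)) ^ m) := by
        gcongr
        exact h1.trans (by gcongr)
    _ = _ := by rw [mul_pow]; ring

lemma PolyGrowth.summable {c : ℕ → ℝ} (h : PolyGrowth c) {x : ℝ} (hx : |x| < 1) :
    Summable fun k => |c k| * |x| ^ k := by
  obtain ⟨C, m, h⟩ := h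
  rcases eq_or_ne x 0 with rfl | hx0
  · refine summable_of_ne_finset_zero (s := {0}) fun b hb => ?_
    have : b ≠ 0 := by simpa using hb
    simp [this]
  have hpos : 0 < |x| := abs_pos.mpr hx0
  have h1 := summable_pow_mul_geometric_of_norm_lt_one m (r := |x|) (by simpa using hx)
  have h2 := ((summable_nat_add_iff 1).2 h1).mul_left (C * |x|⁻¹)
  refine Summable.of_nonneg_of_le (fun k => by positivity) (fun k => ?_) h2
  calc |c k| * |x| ^ k ≤ (C * ((k : ℝ) + 1) ^ m) * |x| ^ k := by gcongr; exact h k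
    _ = _ := by push_cast; field_simp; ring

lemma PolyGrowth.hasSum {c : ℕ → ℝ} (h : PolyGrowth c) {x : ℝ} (hx : |x| < 1) :
    HasSum (fun k => c k * x ^ k) (pser c x) := by
  refine Summable.hasSum (Summable.of_norm ?_)
  simpa [abs_mul, abs_pow] using h.summable hx

lemma PolyGrowth.hasDerivAt {c : ℕ → ℝ} (h : PolyGrowth c) {x : ℝ} (hx : |x| < 1) :
    HasDerivAt (pser c) (pser (_root_.dcoef c) x) x := by
  obtain ⟨r, hxr, hr1⟩ := exists_between hx
  have hr0 : 0 < r := (abs_nonneg x).trans_lt hxr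
  have hu : Summable fun k : ℕ => |(k : ℝ) * c k| * r ^ (k - 1) := by
    rw [← summable_nat_add_iff 1]
    have := h.dcoef.summable (x := r) (by rwa [abs_of_pos hr0])
    simpa [_root_.dcoef, abs_of_pos hr0] using this
  have key := hasDerivAt_tsum_of_isPreconnected (g := fun (k : ℕ) (y : ℝ) => c k * y ^ k)
    (g' := fun (k : ℕ) (y : ℝ) => c k * (k * y ^ (k - 1))) (t := ball (0 : ℝ) r) (y₀ := 0) (y := x)
    hu isOpen_ball (convex_ball _ _).isPreconnected
    (fun k y _ => (hasDerivAt_pow k y).const_mul (c k))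
    (fun k y hy => by
      have hy' : |y| < r := by simpa using hy
      rw [Real.norm_eq_abs, ← mul_assoc, abs_mul, abs_pow, mul_comm (c k)]
      gcongr)
    (by simpa using hr0)
    (h.hasSum (x := 0) (by simp)).summable (by simpa using hxr)
  have hs : Summable fun k : ℕ => c k * (k * x ^ (k - 1)) := by
    rw [← summable_nat_add_iff 1]
    refine (h.dcoef.hasSum hx).summable.congr fun k => ?_
    simp only [_root_.dcoef, Nat.add_sub_cancel]
    push_cast
    ring
  have hsum : pser (_root_.dcoef c) x = ∑' k : ℕ, c k * (k * x ^ (k - 1)) := by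
    rw [hs.tsum_eq_zero_add]
    simp only [pser, _root_.dcoef, Nat.cast_zero, zero_mul, mul_zero, zero_add]
    refine tsum_congr fun k => ?_
    push_cast
    ring
  rw [hsum]
  exact key

/-- Multiplying a power series by `x` shifts its coefficients; the new term of index `0` is
`d 0 = 0`. -/
lemma hasSum_shift {c d : ℕ → ℝ} {x s : ℝ} (h : HasSum (fun k => c k * x ^ k) s)
    (h0 : d 0 = 0) (hd : ∀ k, d (k + 1) = c k) : HasSum (fun k => d k * x ^ k) (x * s) := by
  rw [← hasSum_nat_add_iff' 1]
  simp only [Finset.range_one, Finset.sum_singleton, h0, zero_mul, sub_zero, hd]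
  rw [show (fun k => c k * x ^ (k + 1)) = fun k => x * (c k * x ^ k) from funext fun k => by ring]
  exact h.mul_left x

/-! ### The hypergeometric function `F_l` -/

/-- The hypergeometric differential equation: the coefficient of `xᵏ` on the left-hand side is
`(k+1)(k+γ) c_{k+1} - (k+a)(k+b) c_k`. -/
lemma hypergeometric_ode {c : ℕ → ℝ} {a b γ : ℝ} (h : PolyGrowth c)
    (hrec : ∀ k : ℕ, ((k : ℝ) + 1) * (γ + k) * c (k + 1) = (a + k) * (b + k) * c k)
    {x : ℝ} (hx : |x| < 1) :
    x * (1 - x) * pser (dcoef (dcoef c)) x + (γ - (a + b + 1) * x) * pser (dcoef c) x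
      - a * b * pser c x = 0 := by
  have h0 := h.hasSum hx
  have h1 := h.dcoef.hasSum hx
  have h2 := h.dcoef.dcoef.hasSum hx
  have h1x := hasSum_shift (d := fun k : ℕ => (k : ℝ) * c k) h1 (by simp) (by simp [dcoef])
  have h2x := hasSum_shift (d := fun k : ℕ => (k : ℝ) * dcoef c k) h2 (by simp)
    (by intro k; simp [dcoef])
  have h2xx := hasSum_shift (d := fun k : ℕ => (k : ℝ) * (k - 1) * c k) h2x (by simp)
    (by intro k; simp [dcoef]; ring)
  have hall := (((h2x.sub h2xx).add (h1.mul_left γ)).sub (h1x.mul_left (a + b + 1))).sub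
    (h0.mul_left (a * b))
  have hz := hall.tsum_eq
  rw [tsum_congr (g := fun _ => (0 : ℝ)) fun k => by
    simp only [dcoef]
    linear_combination x ^ k * hrec k, tsum_zero] at hz
  linear_combination -hz

/-- A sequence obeying the recursion of `₂F₁(a, b, γ)` with `0 ≤ a ≤ γ` and `b ≤ 1` is eventually
nonincreasing in absolute value, hence bounded. -/
lemma polyGrowth_of_rec {c : ℕ → ℝ} {a b γ : ℝ} (ha : 0 ≤ a) (hγ : 0 < γ) (haγ : a ≤ γ) (hb : b ≤ 1)
    (hrec : ∀ k : ℕ, ((k : ℝ) + 1) * (γ + k) * c (k + 1) = (a + k) * (b + k) * c k) :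
    PolyGrowth c := by
  -- for `k ≥ K` one has `b + k ≥ 0`
  obtain ⟨K, hK⟩ := exists_nat_ge (-b)
  have hstep : ∀ k, K ≤ k → |c (k + 1)| ≤ |c k| := by
    intro k hk
    have hkK : (K : ℝ) ≤ k := by exact_mod_cast hk
    have hk0 : (0 : ℝ) ≤ k := Nat.cast_nonneg k
    have hp : 0 < ((k : ℝ) + 1) * (γ + k) := by positivity
    have e := congrArg abs (hrec k)
    rw [abs_mul, abs_mul ((a + k) * (b + k)), abs_of_pos hp,
      abs_of_nonneg (mul_nonneg (by linarith) (by linarith) : 0 ≤ (a + k) * (b + k))] at e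
    refine le_of_mul_le_mul_left (a := ((k : ℝ) + 1) * (γ + k)) ?_ hp
    rw [e, mul_comm (a + k)]
    gcongr ?_ * ?_ * _ <;> linarith
  refine ⟨∑ j ∈ Finset.range (K + 1), |c j|, 0, fun k => ?_⟩
  rw [pow_zero, mul_one]
  have hle : ∀ j, j ≤ K → |c j| ≤ ∑ j ∈ Finset.range (K + 1), |c j| := fun j hj =>
    Finset.single_le_sum (f := fun j => |c j|) (fun _ _ => abs_nonneg _)
      (Finset.mem_range.2 (by omega))
  rcases le_total k K with hk | hk
  · exact hle k hk
  · induction k, hk using Nat.le_induction with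
    | base => exact hle K le_rfl
    | succ k hk ih => exact (hstep k hk).trans ih

/-- Coefficients of `F_l`. -/
def flCoef (n l k : ℕ) : ℝ :=
  ((ascPochhammer ℝ k).eval (l : ℝ) * (ascPochhammer ℝ k).eval (1 - (n : ℝ) / 2)) /
      ((ascPochhammer ℝ k).eval ((l : ℝ) + (n : ℝ) / 2) * (Nat.factorial k))

lemma flCoef_rec {n l : ℕ} (hn : 3 ≤ n) (k : ℕ) :
    ((k : ℝ) + 1) * (((l : ℝ) + (n : ℝ) / 2) + k) * flCoef n l (k + 1) =
      ((l : ℝ) + k) * ((1 - (n : ℝ) / 2) + k) * flCoef n l k := by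
  have hn' : (3 : ℝ) ≤ n := by exact_mod_cast hn
  have hγ : 0 < (l : ℝ) + (n : ℝ) / 2 := by positivity
  have hγk : (l : ℝ) + (n : ℝ) / 2 + k ≠ 0 := by positivity
  have h1 : (ascPochhammer ℝ k).eval ((l : ℝ) + (n : ℝ) / 2) ≠ 0 := (ascPochhammer_pos k _ hγ).ne'
  have h2 : (Nat.factorial k : ℝ) ≠ 0 := by positivity
  have h3 : (k : ℝ) + 1 ≠ 0 := by positivity
  simp only [flCoef, ascPochhammer_succ_eval, Nat.factorial_succ, Nat.cast_mul, Nat.cast_add,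
    Nat.cast_one]
  generalize Polynomial.eval ((l : ℝ) + (n : ℝ) / 2) (ascPochhammer ℝ k) = A at *
  generalize (l : ℝ) + (n : ℝ) / 2 + k = B at *
  field_simp

lemma polyGrowth_flCoef {n l : ℕ} (hn : 3 ≤ n) : PolyGrowth (flCoef n l) := by
  have hn' : (3 : ℝ) ≤ n := by exact_mod_cast hn
  have hl : (0 : ℝ) ≤ l := Nat.cast_nonneg l
  exact polyGrowth_of_rec (a := l) (b := 1 - (n : ℝ) / 2) (γ := (l : ℝ) + (n : ℝ) / 2) hl
    (by linarith) (by linarith) (by linarith) (flCoef_rec hn)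

/-! ### Derivatives of a radial function times a polynomial -/

lemma sum_coord_fderiv {n : ℕ} (L : E n →L[ℝ] ℝ) (x : E n) :
    ∑ i : Fin n, x i * L (EuclideanSpace.single i 1) = L x := by
  conv_rhs => rw [← (EuclideanSpace.basisFun (Fin n) ℝ).sum_repr x]
  simp

lemma hasFDerivAt_radial_mul {n : ℕ} {f : ℝ → ℝ} {f' : ℝ} {P : E n → ℝ} {y : E n}
    (hf : HasDerivAt f f' (‖y‖ ^ 2)) (hP : DifferentiableAt ℝ P y) :
    HasFDerivAt (fun x : E n => f (‖x‖ ^ 2) * P x)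
      (f (‖y‖ ^ 2) • fderiv ℝ P y + P y • (f' • (2 • innerSL ℝ y))) y :=
  (hf.comp_hasFDerivAt y (hasStrictFDerivAt_norm_sq y).hasFDerivAt).mul hP.hasFDerivAt

/-- Euler's identity. -/
lemma Nder_of_hom {n l : ℕ} {P : E n → ℝ} (hP : Differentiable ℝ P)
    (hhom : ∀ (c : ℝ) (x : E n), P (c • x) = c ^ l * P x) (x : E n) :
    fderiv ℝ P x x = l * P x := by
  have h1 : HasDerivAt (fun c : ℝ => P (c • x)) (fderiv ℝ P x x) 1 := by
    have hs : HasDerivAt (fun c : ℝ => c • x) x 1 := by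
      simpa using (hasDerivAt_id (1 : ℝ)).smul_const x
    have hP1 : HasFDerivAt P (fderiv ℝ P x) ((1 : ℝ) • x) := by
      rw [one_smul]; exact (hP x).hasFDerivAt
    exact hP1.comp_hasDerivAt (1 : ℝ) hs
  have h2 : HasDerivAt (fun c : ℝ => P (c • x)) (l * P x) 1 := by
    simp_rw [hhom]
    simpa using (hasDerivAt_pow l (1 : ℝ)).mul_const (P x)
  exact h1.unique h2

/-- The Laplacian of `f(|x|²) P(x)`. Here `f₁ = f'` on `(-1, 1)`, so that the first derivatives are
known near `x`, while `f₂ = f''` is only needed at `|x|²`. -/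
lemma lap_radial_mul {n : ℕ} {f f₁ : ℝ → ℝ} {f₂ : ℝ} {P : E n → ℝ} {x : E n}
    (hf : ∀ s : ℝ, |s| < 1 → HasDerivAt f (f₁ s) s) (hf₁ : HasDerivAt f₁ f₂ (‖x‖ ^ 2))
    (hP : ContDiff ℝ 2 P) (hx : ‖x‖ < 1) :
    lap n (fun y => f (‖y‖ ^ 2) * P y) x =
      (4 * ‖x‖ ^ 2 * f₂ + 2 * n * f₁ (‖x‖ ^ 2)) * P x + 4 * f₁ (‖x‖ ^ 2) * fderiv ℝ P x x
        + f (‖x‖ ^ 2) * lap n P x := by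
  have hsq : ∀ y : E n, ‖y‖ < 1 → |‖y‖ ^ 2| < 1 := fun y hy => by
    rw [abs_of_nonneg (by positivity)]
    exact pow_lt_one₀ (norm_nonneg _) hy two_ne_zero
  have hPd : Differentiable ℝ P := hP.differentiable (by norm_num)
  have hfd : Differentiable ℝ (fderiv ℝ P) :=
    (hP.fderiv_right (m := 1) (by norm_num)).differentiable (by norm_num)
  have hterm : ∀ i : Fin n,
      fderiv ℝ (fun y => fderiv ℝ (fun y => f (‖y‖ ^ 2) * P y) y (EuclideanSpace.single i 1)) x
        (EuclideanSpace.single i 1) =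
      4 * f₂ * P x * (x i) ^ 2 + 2 * f₁ (‖x‖ ^ 2) * P x
        + 4 * f₁ (‖x‖ ^ 2) * (x i * fderiv ℝ P x (EuclideanSpace.single i 1))
        + f (‖x‖ ^ 2) * fderiv ℝ (fun y => fderiv ℝ P y (EuclideanSpace.single i 1)) x
            (EuclideanSpace.single i 1) := by
    intro i
    have hcoord : HasFDerivAt (fun y : E n => y i)
        (EuclideanSpace.proj i : E n →L[ℝ] ℝ) x := (EuclideanSpace.proj i : E n →L[ℝ] ℝ).hasFDerivAt
    -- the formula for the first derivatives holds on the whole unit ball, a neighbourhood of `x`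
    have hev : (fun y => fderiv ℝ (fun y => f (‖y‖ ^ 2) * P y) y (EuclideanSpace.single i 1))
        =ᶠ[𝓝 x] fun y => f (‖y‖ ^ 2) * fderiv ℝ P y (EuclideanSpace.single i 1)
          + f₁ (‖y‖ ^ 2) * (2 * (y i * P y)) := by
      filter_upwards [(isOpen_lt continuous_norm continuous_const).mem_nhds hx] with y hy
      rw [(hasFDerivAt_radial_mul (hf _ (hsq y hy)) (hPd y)).fderiv]
      simp [EuclideanSpace.inner_single_right]
      ring
    have hD : DifferentiableAt ℝ (fun y => fderiv ℝ P y (EuclideanSpace.single i 1)) x :=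
      (hfd x).clm_apply (differentiableAt_const _)
    have hQ := ((hcoord.mul (hPd x).hasFDerivAt).const_mul 2)
    have A := hasFDerivAt_radial_mul (hf _ (hsq x hx)) hD
    have B := hasFDerivAt_radial_mul hf₁ hQ.differentiableAt
    have AB := A.add B
    rw [hev.fderiv_eq]
    erw [AB.fderiv, hQ.fderiv]
    simp [EuclideanSpace.inner_single_right]
    ring
  unfold lap
  simp_rw [hterm, Finset.sum_add_distrib, ← Finset.mul_sum, sum_coord_fderiv]
  rw [← EuclideanSpace.real_norm_sq_eq]
  simp
  ring

lemma contDiff_mvPolynomial_eval {n : ℕ} (q : MvPolynomial (Fin n) ℝ) :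
    ContDiff ℝ 2 (fun x : E n => MvPolynomial.eval (fun i => x i) q) := by
  induction q using MvPolynomial.induction_on with
  | C a => simpa using contDiff_const
  | add p q hp hq => simpa using hp.add hq
  | mul_X p i hp =>
    simpa using hp.mul ((EuclideanSpace.proj i : E n →L[ℝ] ℝ).contDiff)

/-- If `P` is a harmonic polynomial on `ℝⁿ`, homogeneous of degree `l`, then
`x ↦ F_l(|x|²)·P(x)` is `H`-harmonic on `B_n`. -/
theorem stmt1 (n : ℕ) (hn : 3 ≤ n) (l : ℕ) (P : E n → ℝ)
    (hpoly : ∃ q : MvPolynomial (Fin n) ℝ, ∀ x : E n, P x = MvPolynomial.eval (fun i => x i) q)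
    (hharm : ∀ x : E n, lap n P x = 0)
    (hhom : ∀ (c : ℝ) (x : E n), P (c • x) = c ^ l * P x) :
    HHarmonic n (fun x => Fl n l (‖x‖ ^ 2) * P x) := by
  obtain ⟨q, hq⟩ := hpoly
  have hP : ContDiff ℝ 2 P := by
    rw [show P = _ from funext hq]; exact contDiff_mvPolynomial_eval q
  intro x hx
  have hx1 : ‖x‖ < 1 := by simpa using hx
  have hx2 : |‖x‖ ^ 2| < 1 := by
    rw [abs_of_nonneg (by positivity)]
    exact pow_lt_one₀ (norm_nonneg _) hx1 two_ne_zero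
  have hg : PolyGrowth (flCoef n l) := polyGrowth_flCoef hn
  have hF : Fl n l = pser (flCoef n l) := rfl
  have hode := hypergeometric_ode hg (flCoef_rec hn) hx2
  have heuler := Nder_of_hom (hP.differentiable (by norm_num)) hhom x
  rw [hF, lap_radial_mul (fun s hs => hg.hasDerivAt hs) (hg.dcoef.hasDerivAt hx2) hP hx1, hharm,
    heuler, Nder,
    (hasFDerivAt_radial_mul (hg.hasDerivAt hx2) (hP.differentiable (by norm_num) x)).fderiv]
  simp only [_root_.add_apply, _root_.smul_apply, innerSL_apply_apply,
    real_inner_self_eq_norm_sq, smul_eq_mul, nsmul_eq_mul, heuler]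
  push_cast
  linear_combination (4 * (1 - ‖x‖ ^ 2) * P x) * hode
end
end
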